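/- For every ρ ∈ (0, 4], the function f_ρ is twice differentiable on ℝ and its second derivative f_ρ'' is Lipschitz continuous with constant 2ρ (i.e. f_ρ is 2ρ-Hessian-Lipschitz). -/

import Mathlib

/-- The piecewise function `f_ρ` from the paper's discussion of the logistic map
embedded in gradient descent with step-size 1. -/
noncomputable def frho (ρ : ℝ) (x : ℝ) : ℝ :=
  if |x| ≤ 1 then
    ρ / 3 * |x| ^ 3 + (1 - ρ) / 2 * x ^ 2 + (ρ - 1) ^ 3 / (6 * ρ ^ 2)
  else if |x| ≤ 3 / 2 then
    -(ρ / 3) * |x| ^ 3 + (1 + 3 * ρ) / 2 * x ^ 2 - 2 * ρ * |x| +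
      ((ρ - 1) ^ 3 + 4 * ρ ^ 3) / (6 * ρ ^ 2)
  else
    1 / 2 * x ^ 2 + ρ / 4 * |x| + (4 * (ρ - 1) ^ 3 - 11 * ρ ^ 3) / (24 * ρ ^ 2)

theorem pp_cube (c s x : ℝ) :
    HasDerivAt (fun x : ℝ => (max (s * x - c) 0) ^ 3) (3 * s * (max (s * x - c) 0) ^ 2) x := by
  have key : ∀ y : ℝ, HasDerivAt (fun y : ℝ => (max y 0) ^ 3) (3 * (max y 0) ^ 2) y := by
    intro y
    rcases lt_trichotomy y 0 with h | h | h
    · rw [max_eq_right h.le]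
      have : HasDerivAt (fun _ : ℝ => (0 : ℝ)) 0 y := hasDerivAt_const _ _
      refine (this.congr_of_eventuallyEq ?_).congr_deriv (by norm_num)
      · filter_upwards [Iio_mem_nhds h] with z hz
        rw [max_eq_right (le_of_lt hz)]; norm_num
    · subst h
      rw [hasDerivAt_iff_isLittleO]
      have h2 : (fun y : ℝ => y ^ 2) =o[nhds 0] (fun y : ℝ => y) := by
        simpa using (Asymptotics.isLittleO_pow_pow (𝕜 := ℝ) (m := 1) (n := 2) (by norm_num))
      have h3 : (fun y : ℝ => y ^ 3) =o[nhds 0] (fun y : ℝ => y) := by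
        simpa using (Asymptotics.isLittleO_pow_pow (𝕜 := ℝ) (m := 1) (n := 3) (by norm_num))
      simp only [max_self, sub_zero]
      norm_num
      refine Asymptotics.IsBigO.trans_isLittleO (Asymptotics.IsBigO.of_bound 1 ?_) h3
      refine Filter.Eventually.of_forall fun z => ?_
      rw [one_mul, norm_pow, norm_pow]
      gcongr
      rw [Real.norm_eq_abs, Real.norm_eq_abs, abs_of_nonneg (le_max_right _ _)]
      exact max_le (le_abs_self _) (abs_nonneg _)
    · rw [max_eq_left h.le]
      have : HasDerivAt (fun y : ℝ => y ^ 3) (3 * y ^ 2) y := by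
        simpa using hasDerivAt_pow 3 y
      refine this.congr_of_eventuallyEq ?_
      filter_upwards [Ioi_mem_nhds h] with z hz
      rw [max_eq_left (le_of_lt hz)]
  have h1 : HasDerivAt (fun x : ℝ => s * x - c) s x := by
    simpa using ((hasDerivAt_id x).const_mul s).sub_const c
  have := (key (s * x - c)).comp x h1
  refine this.congr_deriv ?_
  ring

theorem pp_sq (c s x : ℝ) :
    HasDerivAt (fun x : ℝ => (max (s * x - c) 0) ^ 2) (2 * s * max (s * x - c) 0) x := by
  have key : ∀ y : ℝ, HasDerivAt (fun y : ℝ => (max y 0) ^ 2) (2 * max y 0) y := by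
    intro y
    rcases lt_trichotomy y 0 with h | h | h
    · rw [max_eq_right h.le]
      have : HasDerivAt (fun _ : ℝ => (0 : ℝ)) 0 y := hasDerivAt_const _ _
      refine (this.congr_of_eventuallyEq ?_).congr_deriv (by norm_num)
      · filter_upwards [Iio_mem_nhds h] with z hz
        rw [max_eq_right (le_of_lt hz)]; norm_num
    · subst h
      rw [hasDerivAt_iff_isLittleO]
      have h2 : (fun y : ℝ => y ^ 2) =o[nhds 0] (fun y : ℝ => y) := by
        simpa using (Asymptotics.isLittleO_pow_pow (𝕜 := ℝ) (m := 1) (n := 2) (by norm_num))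
      simp only [max_self, sub_zero]
      norm_num
      refine Asymptotics.IsBigO.trans_isLittleO (Asymptotics.IsBigO.of_bound 1 ?_) h2
      refine Filter.Eventually.of_forall fun z => ?_
      rw [one_mul, norm_pow, norm_pow]
      gcongr
      rw [Real.norm_eq_abs, Real.norm_eq_abs, abs_of_nonneg (le_max_right _ _)]
      exact max_le (le_abs_self _) (abs_nonneg _)
    · rw [max_eq_left h.le]
      have : HasDerivAt (fun y : ℝ => y ^ 2) (2 * y) y := by
        simpa using hasDerivAt_pow 2 y
      refine this.congr_of_eventuallyEq ?_
      filter_upwards [Ioi_mem_nhds h] with z hz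
      rw [max_eq_left (le_of_lt hz)]
  have h1 : HasDerivAt (fun x : ℝ => s * x - c) s x := by
    simpa using ((hasDerivAt_id x).const_mul s).sub_const c
  have := (key (s * x - c)).comp x h1
  refine this.congr_deriv ?_
  ring

theorem pp_abs (c x : ℝ) (hc : 0 ≤ c) (n : ℕ) (hn : n ≠ 0) :
    (max (1 * x - c) 0) ^ n + (max (-1 * x - c) 0) ^ n = (max (|x| - c) 0) ^ n := by
  rcases le_total 0 x with h | h
  · rw [abs_of_nonneg h, max_eq_right (show -1 * x - c ≤ 0 by linarith), zero_pow hn]; simp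
  · rw [abs_of_nonpos h, max_eq_right (show 1 * x - c ≤ 0 by linarith), zero_pow hn]; simp

theorem frho_eq (ρ : ℝ) (h0 : 0 < ρ) : frho ρ = fun x =>
    (ρ - 1) ^ 3 / (6 * ρ ^ 2) + (1 - ρ) / 2 * x ^ 2
     + ρ / 3 * ((max (1 * x - 0) 0) ^ 3 + (max (-1 * x - 0) 0) ^ 3)
     - 2 * ρ / 3 * ((max (1 * x - 1) 0) ^ 3 + (max (-1 * x - 1) 0) ^ 3)
     + ρ / 3 * ((max (1 * x - 3 / 2) 0) ^ 3 + (max (-1 * x - 3 / 2) 0) ^ 3) := by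
  funext x
  rw [pp_abs 0 x le_rfl 3 (by norm_num), pp_abs 1 x (by norm_num) 3 (by norm_num),
    pp_abs (3/2) x (by norm_num) 3 (by norm_num)]
  unfold frho
  rw [← sq_abs x]
  have hx := abs_nonneg x
  generalize |x| = t at *
  rw [max_eq_left (show 0 ≤ t - 0 by linarith)]
  split_ifs with h1 h2
  · rw [max_eq_right (by linarith), max_eq_right (by linarith)]; ring
  · rw [max_eq_left (by linarith), max_eq_right (by linarith)]; field_simp; ring
  · rw [max_eq_left (by linarith), max_eq_left (by linarith)]; field_simp; ring

/-- For every `ρ ∈ (0, 4]`, `f_ρ` is twice differentiable and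
its second derivative is Lipschitz with constant `2ρ` (`2ρ`-Hessian-Lipschitz). -/
theorem frho_hessian_lipschitz (ρ : ℝ) (hρ : ρ ∈ Set.Ioc (0 : ℝ) 4) :
    Differentiable ℝ (frho ρ) ∧ Differentiable ℝ (deriv (frho ρ)) ∧
      LipschitzWith (Real.toNNReal (2 * ρ)) (deriv (deriv (frho ρ))) := by
  have h0 : 0 < ρ := hρ.1
  have d1 : ∀ x, HasDerivAt (frho ρ) ((1 - ρ) * x
     + ρ * ((max (1 * x - 0) 0) ^ 2 - (max (-1 * x - 0) 0) ^ 2)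
     - 2 * ρ * ((max (1 * x - 1) 0) ^ 2 - (max (-1 * x - 1) 0) ^ 2)
     + ρ * ((max (1 * x - 3 / 2) 0) ^ 2 - (max (-1 * x - 3 / 2) 0) ^ 2)) x := by
    intro x
    rw [frho_eq ρ h0]
    have := (((((hasDerivAt_pow 2 x).const_mul ((1 - ρ) / 2)).const_add
      ((ρ - 1) ^ 3 / (6 * ρ ^ 2))).add
      (((pp_cube 0 1 x).add (pp_cube 0 (-1) x)).const_mul (ρ / 3))).sub
      (((pp_cube 1 1 x).add (pp_cube 1 (-1) x)).const_mul (2 * ρ / 3))).add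
      (((pp_cube (3/2) 1 x).add (pp_cube (3/2) (-1) x)).const_mul (ρ / 3))
    refine this.congr_deriv ?_
    push_cast
    ring
  have e1 := _root_.deriv_eq d1
  have d2 : ∀ x, HasDerivAt (deriv (frho ρ))
      (1 - ρ + 2 * ρ * min |x| (max (2 - |x|) (1 / 2))) x := by
    intro x
    rw [e1]
    have := ((((hasDerivAt_id' x).const_mul (1 - ρ)).add
      (((pp_sq 0 1 x).sub (pp_sq 0 (-1) x)).const_mul ρ)).sub
      (((pp_sq 1 1 x).sub (pp_sq 1 (-1) x)).const_mul (2 * ρ))).add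
      (((pp_sq (3/2) 1 x).sub (pp_sq (3/2) (-1) x)).const_mul ρ)
    refine this.congr_deriv ?_
    have a0 := pp_abs 0 x le_rfl 1 (by norm_num)
    have a1 := pp_abs 1 x (by norm_num) 1 (by norm_num)
    have a2 := pp_abs (3/2) x (by norm_num) 1 (by norm_num)
    simp only [pow_one] at a0 a1 a2
    have g : min |x| (max (2 - |x|) (1 / 2)) =
        max (|x| - 0) 0 - 2 * max (|x| - 1) 0 + max (|x| - 3 / 2) 0 := by
      have hx := abs_nonneg x
      generalize |x| = t at *
      rw [max_eq_left (show 0 ≤ t - 0 by linarith)]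
      rcases le_total t 1 with h | h
      · rw [max_eq_right (show t - 1 ≤ 0 by linarith),
          max_eq_right (show t - 3/2 ≤ 0 by linarith), max_eq_left (by linarith),
          min_eq_left (by linarith)]; ring
      rw [max_eq_left (show 0 ≤ t - 1 by linarith)]
      rcases le_total t (3/2) with h' | h'
      · rw [max_eq_right (show t - 3/2 ≤ 0 by linarith), max_eq_left (by linarith),
          min_eq_right (by linarith)]; ring
      · rw [max_eq_left (show 0 ≤ t - 3/2 by linarith), max_eq_right (by linarith),
          min_eq_right (by linarith)]; ring
    rw [g, ← a0, ← a1, ← a2]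
    ring
  have e2 := _root_.deriv_eq d2
  refine ⟨fun x => (d1 x).differentiableAt, fun x => (d2 x).differentiableAt, ?_⟩
  rw [e2]
  refine LipschitzWith.of_dist_le_mul fun x y => ?_
  rw [Real.coe_toNNReal _ (by linarith), Real.dist_eq, Real.dist_eq]
  have k : |min |x| (max (2 - |x|) (1 / 2)) - min |y| (max (2 - |y|) (1 / 2))| ≤ |x - y| := by
    refine le_trans ?_ (abs_abs_sub_abs_le_abs_sub x y)
    generalize |x| = s
    generalize |y| = t
    refine (abs_min_sub_min_le_max _ _ _ _).trans (max_le le_rfl ?_)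
    refine (abs_max_sub_max_le_abs _ _ _).trans (le_of_eq ?_)
    rw [abs_sub_comm]
    congr 1
    ring
  calc _ = |2 * ρ * (min |x| (max (2 - |x|) (1 / 2)) - min |y| (max (2 - |y|) (1 / 2)))| := by
        congr 1; ring
    _ = 2 * ρ * |min |x| (max (2 - |x|) (1 / 2)) - min |y| (max (2 - |y|) (1 / 2))| := by
        rw [abs_mul, abs_of_pos (by linarith)]
    _ ≤ _ := by gcongr
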